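/- For all integers n ≥ 1 one has ℓ_n > 0 and ℓ̃_n < 0; that is, the linear forms ℓ_n = q_n ζ(5) − p_n and ℓ̃_n = q_n ζ(3) − p̃_n are of constant sign. -/

import Mathlib

noncomputable section

open Filter


/-- `a₀(n)` from recursion (1). -/
def a0 (x : ℚ) : ℚ := 41218*x^3 - 48459*x^2 + 20010*x - 2871

/-- `a₁(n)` from recursion (1). -/
def a1 (x : ℚ) : ℚ := 2*(48802112*x^9 + 89030880*x^8 + 36002654*x^7 - 24317344*x^6
  - 19538418*x^5 + 1311365*x^4 + 3790503*x^3 + 460056*x^2 - 271701*x - 60291)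

/-- `a₂(n)` from recursion (1). -/
def a2 (x : ℚ) : ℚ := 3874492*x^8 - 2617900*x^7 - 3144314*x^6 + 2947148*x^5
  + 647130*x^4 - 1182926*x^3 + 115771*x^2 + 170716*x - 44541

/-- The third-order difference equation (1), imposed for all integers `n ≥ 2`. -/
def Rec1 (y : ℕ → ℚ) : Prop := ∀ n : ℕ, 2 ≤ n →
  ((n : ℚ) + 1)^6 * a0 (n : ℚ) * y (n+1) + a1 (n : ℚ) * y n
    - 4*(2*(n : ℚ) - 1) * a2 (n : ℚ) * y (n-1)
    - 4*((n : ℚ) - 1)^4*(2*(n : ℚ) - 1)*(2*(n : ℚ) - 3) * a0 ((n : ℚ) + 1) * y (n-2) = 0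

/-- The (real) value of the Riemann zeta function at a natural number argument. -/
def zetaRe (s : ℕ) : ℝ := (riemannZeta s).re

/-!
For `n ≥ 1` let `F n` be the vector of the series `∑_{t ≥ 1} (t + n/2) (t (t + n))^i K_n(t)`,
`i = 0, 1, 2`, with the very well-poised kernel `K_n`. Creative telescoping gives a rational system
`F (n + 1) = T_n F n`. At `n = 1` the symmetry `t ↦ -1 - t` removes the even zeta values from the
partial fractions, so `F 1 = ζ(5) u + ζ(3) w - v` with rational `u`, `w`, `v`; hence
`F n = ζ(5) u_n + ζ(3) w_n - v_n` along the rational orbits of these vectors under `T_n`.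

Cross products of two orbits evolve under the cofactor matrices of `T_n`, and their last components
satisfy the given recursion. Comparing initial values, `q_n`, `p_n`, `p̃_n` are the last components
of `w_n × u_n`, `w_n × v_n`, `v_n × u_n`, so that `ℓ_n` and `ℓ̃_n` are those of `w_n × F n` and
`F n × u_n`. The entries of `F n` are positive, and `u_n`, `w_n` remain in cones on which the first
coordinate is positive and the second one negative; both signs follow.
-/

section Orbits

open scoped Matrix

variable {ι R : Type*} [Fintype ι]

/-- The solution of the linear difference system `v (m + 1) = A m *ᵥ v m` with `v 0 = v₀`. -/
def matrixOrbit [NonUnitalNonAssocSemiring R] (A : ℕ → Matrix ι ι R) (v₀ : ι → R) : ℕ → ι → R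
  | 0 => v₀
  | m + 1 => A m *ᵥ matrixOrbit A v₀ m

theorem matrixOrbit_mulVec [NonUnitalSemiring R] {A B G : ℕ → Matrix ι ι R}
    (h : ∀ m, A m * G m = G (m + 1) * B m) (c : ι → R) (m : ℕ) :
    matrixOrbit A (G 0 *ᵥ c) m = G m *ᵥ matrixOrbit B c m := by
  induction m with
  | zero => rfl
  | succ m ih => rw [matrixOrbit, ih, matrixOrbit, Matrix.mulVec_mulVec, Matrix.mulVec_mulVec, h]

theorem dotProduct_pos_of_pos [Semiring R] [PartialOrder R] [IsStrictOrderedRing R]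
    {a c : ι → R} (ha : ∀ i, 0 < a i) (hc : 0 < c) : 0 < a ⬝ᵥ c := by
  obtain ⟨hc_nonneg, i, hi⟩ := Pi.lt_def.1 hc
  exact Finset.sum_pos' (fun j _ ↦ mul_nonneg (ha j).le (hc_nonneg j))
    ⟨i, Finset.mem_univ i, mul_pos (ha i) hi⟩

theorem matrixOrbit_pos [Semiring R] [PartialOrder R] [IsStrictOrderedRing R]
    {B : ℕ → Matrix ι ι R} (hB : ∀ m i j, 0 < B m i j) {c : ι → R} (hc : 0 < c) (m : ℕ) :
    0 < matrixOrbit B c m := by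
  induction m with
  | zero => exact hc
  | succ m ih =>
    have step_pos (i : ι) : 0 < (B m *ᵥ matrixOrbit B c m) i := dotProduct_pos_of_pos (hB m i) ih
    obtain ⟨i, -⟩ := (Pi.lt_def.1 hc).2
    exact Pi.lt_def.2 ⟨fun j ↦ (step_pos j).le, i, step_pos i⟩

theorem mulVec_cross_mulVec [CommRing R] (A : Matrix (Fin 3) (Fin 3) R) (v w : Fin 3 → R) :
    (A *ᵥ v) ⨯₃ (A *ᵥ w) = A.adjugateᵀ *ᵥ (v ⨯₃ w) := by
  ext i
  fin_cases i <;>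
    simp only [Matrix.adjugate_fin_three, cross_apply, Matrix.mulVec, dotProduct,
      Fin.sum_univ_three, Matrix.transpose_apply, Matrix.of_apply, Matrix.cons_val,
      Fin.zero_eta, Fin.mk_one, Fin.reduceFinMk] <;>
    ring

theorem matrixOrbit_cross [CommRing R] (A : ℕ → Matrix (Fin 3) (Fin 3) R) (v w : Fin 3 → R)
    (m : ℕ) :
    matrixOrbit A v m ⨯₃ matrixOrbit A w m =
      matrixOrbit (fun m ↦ (A m).adjugateᵀ) (v ⨯₃ w) m := by
  induction m with
  | zero => rfl
  | succ m ih => rw [matrixOrbit, matrixOrbit, matrixOrbit, mulVec_cross_mulVec, ih]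

end Orbits

section Recursion

open scoped Matrix

theorem a0_pos {x : ℚ} (hx : 1 ≤ x) : 0 < a0 x := by
  obtain ⟨y, rfl⟩ : ∃ y, x = y + 1 := ⟨x - 1, by ring⟩
  have hy : 0 ≤ y := by linarith
  have expansion : a0 (y + 1) = 41218 * y ^ 3 + 75195 * y ^ 2 + 46746 * y + 9898 := by
    unfold a0; ring
  rw [expansion]
  positivity

theorem Rec1.ext {y z : ℕ → ℚ} (hy : Rec1 y) (hz : Rec1 z) (h0 : y 0 = z 0) (h1 : y 1 = z 1)
    (h2 : y 2 = z 2) : y = z := by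
  have agree (n : ℕ) : y n = z n ∧ y (n + 1) = z (n + 1) ∧ y (n + 2) = z (n + 2) := by
    induction n with
    | zero => exact ⟨h0, h1, h2⟩
    | succ n ih =>
      obtain ⟨e0, e1, e2⟩ := ih
      refine ⟨e1, e2, ?_⟩
      have lead_pos : 0 < (((n + 2 : ℕ) : ℚ) + 1) ^ 6 * a0 (n + 2 : ℕ) :=
        mul_pos (by positivity) (a0_pos (by exact_mod_cast (by omega : 1 ≤ n + 2)))
      have ry := hy (n + 2) (by omega)
      have rz := hz (n + 2) (by omega)
      simp only [Nat.add_sub_cancel, show n + 2 - 1 = n + 1 from rfl, e0, e1, e2] at ry rz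
      exact mul_left_cancel₀ lead_pos.ne' (by linear_combination ry - rz)
  exact funext fun n ↦ (agree n).1

/-- The matrix of the system `F_{n+1} = transfer n *ᵥ F_n`, `n ≥ 1`, satisfied by the vector of the
three hypergeometric series `wellPoisedSeries n`; it was found by creative telescoping. -/
def transfer (x : ℚ) : Matrix (Fin 3) (Fin 3) ℚ :=
  !![(9 + 77 * x + 283 * x ^ 2 + 575 * x ^ 3 + 662 * x ^ 4 + 302 * x ^ 5) / (x + 1) ^ 5,
      (33 + 230 * x + 557 * x ^ 2 + 262 * x ^ 3) / (x + 1) ^ 5,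
      -(196 * x) / (x + 1) ^ 5;
    -(2 + 19 * x + 77 * x ^ 2 + 170 * x ^ 3 + 208 * x ^ 4 + 98 * x ^ 5) / (x + 1) ^ 3,
      -(12 + 81 * x + 192 * x ^ 2 + 90 * x ^ 3) / (x + 1) ^ 3,
      66 * x / (x + 1) ^ 3;
    (2 * x + 15 * x ^ 2 + 45 * x ^ 3 + 65 * x ^ 4 + 33 * x ^ 5) / (x + 1),
      (5 + 32 * x + 73 * x ^ 2 + 34 * x ^ 3) / (x + 1),
      -(24 * x) / (x + 1)]

/-- The cofactor matrix of `transfer x`: it drives the `2 × 2` minors of pairs of solutions of the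
system, collected in their cross product. -/
def cofactorTransfer (x : ℚ) : Matrix (Fin 3) (Fin 3) ℚ :=
  -!![x * (42 + 84 * x) / (x + 1) ^ 2,
      x * (48 + 180 * x + 174 * x ^ 2) / (x + 1),
      10 + 95 * x + 357 * x ^ 2 + 592 * x ^ 3 + 362 * x ^ 4;
    x * (188 + 376 * x) / (x + 1) ^ 4,
      x * (216 + 808 * x + 780 * x ^ 2) / (x + 1) ^ 3,
      (45 + 427 * x + 1603 * x ^ 2 + 2655 * x ^ 3 + 1622 * x ^ 4) / (x + 1) ^ 2;
    x * (174 + 348 * x) / (x + 1) ^ 6,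
      x * (202 + 752 * x + 724 * x ^ 2) / (x + 1) ^ 5,
      (42 + 398 * x + 1492 * x ^ 2 + 2466 * x ^ 3 + 1504 * x ^ 4) / (x + 1) ^ 4]

theorem adjugate_transfer_transpose {x : ℚ} (hx : x + 1 ≠ 0) :
    (transfer x).adjugateᵀ = cofactorTransfer x := by
  ext i j
  fin_cases i <;> fin_cases j <;>
    simp only [transfer, cofactorTransfer, Matrix.adjugate_fin_three, Matrix.transpose_apply,
      Matrix.neg_apply, Matrix.of_apply, Matrix.cons_val, Fin.zero_eta, Fin.mk_one,
      Fin.reduceFinMk] <;>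
    field_simp <;>
    ring

/-- The rational coefficients of `ζ(5)` in the three components of `wellPoisedSeries 1`. -/
def zetaFivePart : Fin 3 → ℚ := ![9, -2, 0]

/-- The rational coefficients of `ζ(3)` in the three components of `wellPoisedSeries 1`. -/
def zetaThreePart : Fin 3 → ℚ := ![33, -12, 5]

/-- The negatives of the rational terms of the three components of `wellPoisedSeries 1`. -/
def rationalPart : Fin 3 → ℚ := ![49, -33 / 2, 6]

/-- The solution of the system `transfer` that starts from `v₀` at `n = 1`; index `m` stands for
`n = m + 1`. -/
def transferOrbit (v₀ : Fin 3 → ℚ) : ℕ → Fin 3 → ℚ :=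
  matrixOrbit (fun m ↦ transfer (m + 1)) v₀

/-- The solution of `Rec1` formed by the last components of the orbit of `W` under
`cofactorTransfer`. The orbit supplies the values from `n = 1` on; the value at `0` is the one
that the recursion at `n = 2` forces. -/
def minorSeq (W : Fin 3 → ℚ) : ℕ → ℚ
  | 0 => 2 * (rationalPart ⬝ᵥ W)
  | m + 1 => matrixOrbit (fun m ↦ cofactorTransfer (m + 1)) W m 2

theorem minorSeq_cross (v w : Fin 3 → ℚ) (m : ℕ) :
    minorSeq (v ⨯₃ w) (m + 1) =
      transferOrbit v m 0 * transferOrbit w m 1 - transferOrbit v m 1 * transferOrbit w m 0 := by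
  have cofactor_eq : (fun m : ℕ ↦ cofactorTransfer (m + 1)) =
      fun m : ℕ ↦ (transfer (m + 1)).adjugateᵀ :=
    funext fun m ↦ (adjugate_transfer_transpose (by positivity)).symm
  rw [minorSeq, cofactor_eq, ← matrixOrbit_cross]
  rfl

theorem cofactorTransfer_recursion {x : ℚ} (hx : 0 ≤ x) (W : Fin 3 → ℚ) :
    let W₁ := cofactorTransfer (x + 1) *ᵥ W
    let W₂ := cofactorTransfer (x + 1 + 1) *ᵥ W₁
    let W₃ := cofactorTransfer (x + 2 + 1) *ᵥ W₂
    (x + 3 + 1) ^ 6 * a0 (x + 3) * W₃ 2 + a1 (x + 3) * W₂ 2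
      - 4 * (2 * (x + 3) - 1) * a2 (x + 3) * W₁ 2
      - 4 * (x + 3 - 1) ^ 4 * (2 * (x + 3) - 1) * (2 * (x + 3) - 3) * a0 (x + 3 + 1) * W 2
      = 0 := by
  simp only [cofactorTransfer, Matrix.mulVec, dotProduct, Fin.sum_univ_three, Matrix.neg_apply,
    Matrix.of_apply, Matrix.cons_val, a0, a1, a2]
  field_simp
  ring

theorem rec1_minorSeq (W : Fin 3 → ℚ) : Rec1 (minorSeq W) := by
  intro n hn
  obtain rfl | ⟨m, rfl⟩ : n = 2 ∨ ∃ m, n = m + 3 := by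
    obtain ⟨m, rfl⟩ := Nat.exists_eq_add_of_le' hn
    cases m <;> simp
  · simp only [minorSeq, matrixOrbit, rationalPart, cofactorTransfer, Matrix.mulVec, dotProduct,
      Fin.sum_univ_three, Matrix.neg_apply, Matrix.of_apply, Matrix.cons_val, Nat.add_one_sub_one,
      tsub_self, a0, a1, a2]
    norm_num
    ring
  · simp only [minorSeq, matrixOrbit]
    push_cast
    exact cofactorTransfer_recursion m.cast_nonneg _

end Recursion

section Cone

open scoped Matrix

/-- Columns: generators of a cone of vectors with positive first and negative second component,
scaled so that the cones at successive indices are compatible with `transfer`. -/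
def coneGenerators (x : ℚ) : Matrix (Fin 3) (Fin 3) ℚ :=
  !![4, 5, 5; -x ^ 2, -x ^ 2, -(2 * x ^ 2); 0, 0, x ^ 4]

/-- The matrix of `transfer x` with respect to the columns of `coneGenerators x` and
`coneGenerators (x + 1)`. -/
def coneTransfer (x : ℚ) : Matrix (Fin 3) (Fin 3) ℚ :=
  (1 / (x + 1) ^ 5) •
    !![4 + 32 * x + 106 * x ^ 2 + 185 * x ^ 3 + 174 * x ^ 4 + 74 * x ^ 5,
        5 + 40 * x + 133 * x ^ 2 + 235 * x ^ 3 + 227 * x ^ 4 + 97 * x ^ 5,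
        5 + 40 * x + 131 * x ^ 2 + 220 * x ^ 3 + 189 * x ^ 4 + 65 * x ^ 5;
      4 + 28 * x + 80 * x ^ 2 + 118 * x ^ 3 + 92 * x ^ 4 + 32 * x ^ 5,
        5 + 35 * x + 100 * x ^ 2 + 148 * x ^ 3 + 117 * x ^ 4 + 41 * x ^ 5,
        5 + 35 * x + 100 * x ^ 2 + 146 * x ^ 3 + 109 * x ^ 4 + 33 * x ^ 5;
      8 * x + 55 * x ^ 2 + 148 * x ^ 3 + 187 * x ^ 4 + 98 * x ^ 5,
        10 * x + 70 * x ^ 2 + 193 * x ^ 3 + 252 * x ^ 4 + 131 * x ^ 5,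
        10 * x + 65 * x ^ 2 + 161 * x ^ 3 + 179 * x ^ 4 + 73 * x ^ 5]

theorem transfer_mul_coneGenerators {x : ℚ} (hx : x + 1 ≠ 0) :
    transfer x * coneGenerators x = coneGenerators (x + 1) * coneTransfer x := by
  ext i j
  fin_cases i <;> fin_cases j <;>
    simp only [transfer, coneGenerators, coneTransfer, Matrix.mul_apply, Fin.sum_univ_three,
      Matrix.smul_apply, smul_eq_mul, Matrix.of_apply, Matrix.cons_val, Fin.zero_eta, Fin.mk_one,
      Fin.reduceFinMk] <;>
    field_simp <;>
    ring

theorem coneTransfer_pos {x : ℚ} (hx : 0 < x) (i j : Fin 3) : 0 < coneTransfer x i j := by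
  fin_cases i <;> fin_cases j <;>
    simp only [coneTransfer, Matrix.smul_apply, smul_eq_mul, Matrix.of_apply, Matrix.cons_val,
      Fin.zero_eta, Fin.mk_one, Fin.reduceFinMk] <;>
    positivity

theorem transferOrbit_sign {c : Fin 3 → ℚ} (hc : 0 < c) (m : ℕ) :
    0 < transferOrbit (coneGenerators 1 *ᵥ c) m 0 ∧
      transferOrbit (coneGenerators 1 *ᵥ c) m 1 < 0 := by
  have intertwine (m : ℕ) : transfer (m + 1) * coneGenerators (m + 1) =
      coneGenerators ((m + 1 : ℕ) + 1) * coneTransfer (m + 1) := by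
    rw [transfer_mul_coneGenerators (by positivity), Nat.cast_succ]
  have orbit_eq := matrixOrbit_mulVec (G := fun m : ℕ ↦ coneGenerators (m + 1)) intertwine c m
  have coords_pos : 0 < matrixOrbit (fun m : ℕ ↦ coneTransfer (m + 1)) c m :=
    matrixOrbit_pos (fun m ↦ coneTransfer_pos (by positivity)) hc m
  simp only [Nat.cast_zero, zero_add] at orbit_eq
  rw [transferOrbit, orbit_eq]
  constructor
  · refine dotProduct_pos_of_pos (fun j ↦ ?_) coords_pos
    fin_cases j <;> simp [coneGenerators]
  · rw [← neg_pos, ← Pi.neg_apply, ← Matrix.neg_mulVec]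
    refine dotProduct_pos_of_pos (fun j ↦ ?_) coords_pos
    fin_cases j <;>
      simp only [coneGenerators, Matrix.neg_apply, Matrix.of_apply, Matrix.cons_val, neg_neg,
        Fin.zero_eta, Fin.mk_one, Fin.reduceFinMk] <;>
      positivity

theorem transferOrbit_zetaFivePart_sign (m : ℕ) :
    0 < transferOrbit zetaFivePart m 0 ∧ transferOrbit zetaFivePart m 1 < 0 := by
  have coords : zetaFivePart = coneGenerators 1 *ᵥ ![1, 1, 0] := by
    ext i
    fin_cases i <;> norm_num [zetaFivePart, coneGenerators]
  rw [coords]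
  exact transferOrbit_sign
    (by simp [Pi.lt_def, Pi.le_def, Fin.forall_fin_succ, Fin.exists_fin_succ]) m

theorem transferOrbit_zetaThreePart_sign (m : ℕ) :
    0 < transferOrbit zetaThreePart m 0 ∧ transferOrbit zetaThreePart m 1 < 0 := by
  have coords : zetaThreePart = coneGenerators 1 *ᵥ ![2, 0, 5] := by
    ext i
    fin_cases i <;> norm_num [zetaThreePart, coneGenerators]
  rw [coords]
  exact transferOrbit_sign
    (by simp [Pi.lt_def, Pi.le_def, Fin.forall_fin_succ, Fin.exists_fin_succ]) m

end Cone

section Kernel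

open scoped Nat

theorem prod_range_mul_of_shift {M : Type*} [CommMonoid M] {f g : ℕ → M} {a b : M} {n : ℕ}
    (hg : ∀ j, g j = f (j + 1)) (ha : a = f 0) (hb : b = f n) :
    (∏ j ∈ Finset.range n, g j) * a = (∏ j ∈ Finset.range n, f j) * b := by
  rw [Finset.prod_congr rfl fun j _ ↦ hg j, ha, hb, ← Finset.prod_range_succ',
    Finset.prod_range_succ]

/-- The kernel `n!⁴ ∏_{j=1}^n (t - j) ∏_{j=1}^n (t + n + j) / ∏_{j=0}^n (t + j)⁶` of a very
well-poised hypergeometric series: it is symmetric under `t ↦ -n - t`. -/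
def wellPoisedKernel (n : ℕ) (t : ℝ) : ℝ :=
  (n ! : ℝ) ^ 4 * (∏ j ∈ Finset.range n, (t - (j + 1))) *
    (∏ j ∈ Finset.range n, (t + n + (j + 1))) / (∏ j ∈ Finset.range (n + 1), (t + j)) ^ 6

theorem wellPoisedKernel_succ (n : ℕ) {t : ℝ} (ht : t + n + 1 ≠ 0) :
    wellPoisedKernel (n + 1) t = wellPoisedKernel n t *
      ((n + 1) ^ 4 * (t - (n + 1)) * (t + 2 * n + 1) * (t + 2 * n + 2) / (t + n + 1) ^ 7) := by
  have upper_factor : (∏ j ∈ Finset.range n, (t + (n + 1 : ℕ) + (j + 1))) * (t + n + 1) =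
      (∏ j ∈ Finset.range n, (t + n + (j + 1))) * (t + 2 * n + 1) :=
    prod_range_mul_of_shift (fun j ↦ by push_cast; ring) (by simp [add_assoc]) (by ring)
  unfold wellPoisedKernel
  rw [Finset.prod_range_succ _ n, Finset.prod_range_succ (fun j : ℕ ↦ t + (n + 1 : ℕ) + (j + 1)),
    Finset.prod_range_succ _ (n + 1), eq_div_of_mul_eq ht upper_factor, Nat.factorial_succ]
  push_cast
  have ht' : t + (n + 1) ≠ 0 := by rwa [← add_assoc]
  field_simp
  ring

theorem wellPoisedKernel_shift (n : ℕ) {t : ℝ} (ht : 0 < t) :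
    (t - n) * wellPoisedKernel n (t + 1) =
      wellPoisedKernel n t * (t ^ 7 * (t + 2 * n + 1) / (t + n + 1) ^ 7) := by
  have lower_factor : (∏ j ∈ Finset.range n, (t - (j + 1))) * t =
      (∏ j ∈ Finset.range n, (t + 1 - (j + 1))) * (t - n) :=
    prod_range_mul_of_shift (fun j ↦ by push_cast; ring) (by simp) (by ring)
  have upper_factor : (∏ j ∈ Finset.range n, (t + 1 + n + (j + 1))) * (t + n + 1) =
      (∏ j ∈ Finset.range n, (t + n + (j + 1))) * (t + 2 * n + 1) :=
    prod_range_mul_of_shift (fun j ↦ by push_cast; ring) (by simp [add_assoc]) (by ring)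
  have denominator_factor : (∏ j ∈ Finset.range (n + 1), (t + 1 + j)) * t =
      (∏ j ∈ Finset.range (n + 1), (t + j)) * (t + n + 1) :=
    prod_range_mul_of_shift (fun j ↦ by push_cast; ring) (by simp) (by push_cast; ring)
  have : 0 < ∏ j ∈ Finset.range (n + 1), (t + j) :=
    Finset.prod_pos fun j _ ↦ by positivity
  unfold wellPoisedKernel
  rw [eq_div_of_mul_eq (by positivity) upper_factor,
    eq_div_of_mul_eq (by positivity) denominator_factor]
  field_simp
  linear_combination -lower_factor

theorem wellPoisedKernel_eq_zero {n k : ℕ} (hk : k < n) : wellPoisedKernel n (k + 1) = 0 := by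
  have factor_zero : ∏ j ∈ Finset.range n, ((k : ℝ) + 1 - (j + 1)) = 0 :=
    Finset.prod_eq_zero (Finset.mem_range.2 hk) (sub_self _)
  rw [wellPoisedKernel, factor_zero, mul_zero, zero_mul, zero_div]

theorem wellPoisedKernel_pos {n : ℕ} {t : ℝ} (ht : n < t) : 0 < wellPoisedKernel n t := by
  have ht_pos : 0 < t := n.cast_nonneg.trans_lt ht
  have : 0 < ∏ j ∈ Finset.range n, (t - (j + 1)) := Finset.prod_pos fun j hj ↦ by
    have hj : (j : ℝ) + 1 ≤ n := by exact_mod_cast Finset.mem_range.1 hj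
    linarith
  have : 0 < ∏ j ∈ Finset.range n, (t + n + (j + 1)) :=
    Finset.prod_pos fun j _ ↦ by positivity
  have : 0 < ∏ j ∈ Finset.range (n + 1), (t + j) :=
    Finset.prod_pos fun j _ ↦ by positivity
  unfold wellPoisedKernel
  positivity

theorem wellPoisedKernel_nonneg (n k : ℕ) : 0 ≤ wellPoisedKernel n (k + 1) := by
  obtain hk | hk := lt_or_ge k n
  · exact (wellPoisedKernel_eq_zero hk).ge
  · exact (wellPoisedKernel_pos (by exact_mod_cast Nat.lt_succ_of_le hk)).le

theorem wellPoisedKernel_le {n : ℕ} {t : ℝ} (ht : n < t) :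
    wellPoisedKernel n t ≤ (n ! : ℝ) ^ 4 * 3 ^ n / t ^ (4 * n + 6) := by
  have ht_pos : 0 < t := n.cast_nonneg.trans_lt ht
  have index_le {j : ℕ} (hj : j ∈ Finset.range n) : (j : ℝ) + 1 ≤ n := by
    exact_mod_cast Finset.mem_range.1 hj
  have lower_le : ∏ j ∈ Finset.range n, (t - (j + 1)) ≤ t ^ n := by
    rw [Finset.pow_eq_prod_const t n]
    exact Finset.prod_le_prod (fun j hj ↦ by linarith [index_le hj]) fun j _ ↦ by linarith
  have upper_le : ∏ j ∈ Finset.range n, (t + n + (j + 1)) ≤ (3 * t) ^ n := by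
    rw [Finset.pow_eq_prod_const (3 * t) n]
    exact Finset.prod_le_prod (fun j _ ↦ by positivity) fun j hj ↦ by linarith [index_le hj]
  have le_denominator : t ^ (n + 1) ≤ ∏ j ∈ Finset.range (n + 1), (t + j) := by
    rw [Finset.pow_eq_prod_const t (n + 1)]
    exact Finset.prod_le_prod (fun j _ ↦ by positivity) fun j _ ↦ by simp
  calc wellPoisedKernel n t
      ≤ (n ! : ℝ) ^ 4 * t ^ n * (3 * t) ^ n / (t ^ (n + 1)) ^ 6 := by
        unfold wellPoisedKernel
        gcongr
    _ = (n ! : ℝ) ^ 4 * 3 ^ n / t ^ (4 * n + 6) := by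
        rw [div_eq_div_iff (by positivity) (by positivity)]
        ring

end Kernel

section KernelSum

open scoped Nat
open Polynomial

theorem summable_eval_mul_wellPoisedKernel {n : ℕ} {P : ℝ[X]} (hP : P.natDegree ≤ 4 * n + 4) :
    Summable fun k : ℕ ↦ P.eval ((k : ℝ) + 1) * wellPoisedKernel n (k + 1) := by
  have shift_atTop : Tendsto (fun k : ℕ ↦ (k : ℝ) + 1) atTop atTop :=
    tendsto_atTop_add_const_right _ _ tendsto_natCast_atTop_atTop
  have eval_isBigO : (fun k : ℕ ↦ P.eval ((k : ℝ) + 1)) =O[atTop]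
      fun k : ℕ ↦ ((k : ℝ) + 1) ^ (4 * n + 4) := by
    have h := Polynomial.isBigO_atTop_of_degree_le P (X ^ (4 * n + 4))
      (by rw [degree_X_pow]; exact natDegree_le_iff_degree_le.1 hP)
    simp only [eval_pow, eval_X] at h
    exact h.comp_tendsto shift_atTop
  have kernel_isBigO : (fun k : ℕ ↦ wellPoisedKernel n (k + 1)) =O[atTop]
      fun k : ℕ ↦ 1 / ((k : ℝ) + 1) ^ (4 * n + 6) := by
    refine Asymptotics.IsBigO.of_bound ((n ! : ℝ) ^ 4 * 3 ^ n) ?_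
    filter_upwards [eventually_ge_atTop n] with k hk
    rw [Real.norm_of_nonneg (wellPoisedKernel_nonneg n k), Real.norm_of_nonneg (by positivity),
      mul_one_div]
    exact wellPoisedKernel_le (by exact_mod_cast Nat.lt_succ_of_le hk)
  have inverse_square_summable : Summable fun k : ℕ ↦ 1 / ((k : ℝ) + 1) ^ 2 := by
    exact_mod_cast (summable_nat_add_iff 1).2 (Real.summable_one_div_nat_pow.2 one_lt_two)
  refine summable_of_isBigO_nat inverse_square_summable
    ((eval_isBigO.mul kernel_isBigO).congr_right fun k ↦ ?_)
  field_simp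
  ring

/-- The series `∑_{t ≥ 1} P(t) K_n(t)`, where `K_n` is `wellPoisedKernel n`; it converges for
`P.natDegree ≤ 4 * n + 4`. -/
def kernelSum (n : ℕ) (P : ℝ[X]) : ℝ :=
  ∑' k : ℕ, P.eval ((k : ℝ) + 1) * wellPoisedKernel n (k + 1)

theorem kernelSum_sum {ι : Type*} [Fintype ι] {n : ℕ} (c : ι → ℝ) {P : ι → ℝ[X]}
    (hP : ∀ i, (P i).natDegree ≤ 4 * n + 4) :
    kernelSum n (∑ i, C (c i) * P i) = ∑ i, c i * kernelSum n (P i) := by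
  have summable_term (i : ι) := (summable_eval_mul_wellPoisedKernel (hP i)).mul_left (c i)
  simp only [kernelSum, ← tsum_mul_left]
  rw [← Summable.tsum_finsetSum fun i _ ↦ summable_term i]
  simp only [eval_finsetSum, eval_mul, eval_C, Finset.sum_mul, mul_assoc]

theorem kernelSum_pos {n : ℕ} {P : ℝ[X]} (hP : P.natDegree ≤ 4 * n + 4)
    (hpos : ∀ t, 0 < t → 0 < P.eval t) : 0 < kernelSum n P :=
  (summable_eval_mul_wellPoisedKernel hP).tsum_pos
    (fun k ↦ mul_nonneg (hpos _ (by positivity)).le (wellPoisedKernel_nonneg n k)) n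
    (mul_pos (hpos _ (by positivity)) (wellPoisedKernel_pos (lt_add_one _)))

theorem wellPoisedKernel_telescope {n : ℕ} {t a b q q' : ℝ} (ht : 0 < t)
    (h : a * ((n + 1) ^ 4 * (t - (n + 1)) * (t + 2 * n + 1) * (t + 2 * n + 2)) =
      (t + n + 1) ^ 7 * (b - (t - (n + 1)) * q) + q' * (t ^ 7 * (t + 2 * n + 1))) :
    a * wellPoisedKernel (n + 1) t = b * wellPoisedKernel n t +
      ((t - n) * q' * wellPoisedKernel n (t + 1) - (t - (n + 1)) * q * wellPoisedKernel n t) := by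
  have hden : t + n + 1 ≠ 0 := by positivity
  calc a * wellPoisedKernel (n + 1) t
      = wellPoisedKernel n t *
          (a * ((n + 1) ^ 4 * (t - (n + 1)) * (t + 2 * n + 1) * (t + 2 * n + 2))) /
            (t + n + 1) ^ 7 := by
        rw [wellPoisedKernel_succ n hden]
        ring
    _ = b * wellPoisedKernel n t +
          (q' * (wellPoisedKernel n t * (t ^ 7 * (t + 2 * n + 1) / (t + n + 1) ^ 7)) -
            (t - (n + 1)) * q * wellPoisedKernel n t) := by
        rw [h]
        field_simp
        ring
    _ = _ := by
        rw [← wellPoisedKernel_shift n ht]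
        ring

theorem kernelSum_succ_eq {n : ℕ} {A B Q : ℝ[X]}
    (hB : B.natDegree ≤ 4 * n + 4) (hQ : Q.natDegree ≤ 4 * n + 3)
    (hABQ : ∀ t, A.eval t * ((n + 1) ^ 4 * (t - (n + 1)) * (t + 2 * n + 1) * (t + 2 * n + 2)) =
      (t + n + 1) ^ 7 * (B.eval t - (t - (n + 1)) * Q.eval t) +
        Q.eval (t + 1) * (t ^ 7 * (t + 2 * n + 1))) :
    kernelSum (n + 1) A = kernelSum n B := by
  let S (k : ℕ) : ℝ :=
    ((X - C ((n : ℝ) + 1)) * Q).eval ((k : ℝ) + 1) * wellPoisedKernel n (k + 1)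
  have S_summable : Summable S := by
    refine summable_eval_mul_wellPoisedKernel (natDegree_mul_le.trans ?_)
    rw [natDegree_X_sub_C]
    omega
  have S_zero : S 0 = 0 := by
    obtain rfl | hn := n.eq_zero_or_pos
    · simp [S]
    · exact mul_eq_zero_of_right _ (wellPoisedKernel_eq_zero hn)
  have telescope (k : ℕ) : A.eval ((k : ℝ) + 1) * wellPoisedKernel (n + 1) (k + 1) =
      B.eval ((k : ℝ) + 1) * wellPoisedKernel n (k + 1) + (S (k + 1) - S k) := by
    rw [wellPoisedKernel_telescope (by positivity) (hABQ (k + 1))]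
    simp only [S, eval_mul, eval_sub, eval_X, eval_C, Nat.cast_succ]
    ring
  have S_shift_summable : Summable fun k ↦ S (k + 1) := (summable_nat_add_iff 1).2 S_summable
  calc kernelSum (n + 1) A
      = ∑' k : ℕ, (B.eval ((k : ℝ) + 1) * wellPoisedKernel n (k + 1) + (S (k + 1) - S k)) :=
        tsum_congr telescope
    _ = kernelSum n B + (∑' k : ℕ, S (k + 1) - ∑' k : ℕ, S k) := by
        rw [(summable_eval_mul_wellPoisedKernel hB).tsum_add (S_shift_summable.sub S_summable),
          S_shift_summable.tsum_sub S_summable, kernelSum]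
    _ = kernelSum n B := by rw [S_summable.tsum_eq_zero_add, S_zero]; ring

end KernelSum

section WellPoisedSeries

open scoped Matrix
open Polynomial

/-- The weights `(t + x/2) (t (t + x))^i` of the well-poised series: they are antisymmetric under
`t ↦ -x - t`. -/
def wellPoisedWeight (x : ℝ) (i : ℕ) : ℝ[X] := (X + C (x / 2)) * (X * (X + C x)) ^ i

theorem natDegree_wellPoisedWeight (x : ℝ) (i : ℕ) :
    (wellPoisedWeight x i).natDegree = 2 * i + 1 := by
  have monic_quadratic : (X * (X + C x)).Monic := monic_X.mul (monic_X_add_C x)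
  rw [wellPoisedWeight, (monic_X_add_C (x / 2)).natDegree_mul (monic_quadratic.pow i),
    monic_quadratic.natDegree_pow, monic_X.natDegree_mul (monic_X_add_C x), natDegree_X_add_C,
    natDegree_X, natDegree_X_add_C]
  ring

theorem natDegree_wellPoisedWeight_le {n : ℕ} (hn : 1 ≤ n) (x : ℝ) (i : Fin 3) :
    (wellPoisedWeight x i).natDegree ≤ 4 * n + 4 := by
  rw [natDegree_wellPoisedWeight]
  omega

/-- The three very well-poised hypergeometric series, linear forms in `1`, `ζ(3)`, `ζ(5)`, whose
`2 × 2` minors against the coefficient vectors are the linear forms of the theorem. -/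
def wellPoisedSeries (n : ℕ) (i : Fin 3) : ℝ := kernelSum n (wellPoisedWeight n i)

theorem wellPoisedSeries_pos {n : ℕ} (hn : 1 ≤ n) (i : Fin 3) : 0 < wellPoisedSeries n i := by
  refine kernelSum_pos (natDegree_wellPoisedWeight_le hn n i) fun t ht ↦ ?_
  simp only [wellPoisedWeight, eval_mul, eval_pow, eval_add, eval_X, eval_C]
  positivity

/-- The certificates of creative telescoping for the rows of `transfer`: row `i` of the system is
the sum over `t` of the identity `certificate_identity x i t`. -/
def certificate (x : ℝ) : Fin 3 → ℝ[X] :=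
  ![-C (1 / (2 * (x + 1) ^ 5)) *
      (C (2 + 21 * x + 96 * x ^ 2 + 247 * x ^ 3 + 378 * x ^ 4 + 306 * x ^ 5) +
        C (11 + 108 * x + 453 * x ^ 2 + 1018 * x ^ 3 + 1152 * x ^ 4) * X +
        C (32 + 291 * x + 1074 * x ^ 2 + 1795 * x ^ 3) * X ^ 2 +
        C (65 + 522 * x + 1437 * x ^ 2) * X ^ 3 + C (98 + 588 * x) * X ^ 4 + C 98 * X ^ 5),
    C (1 / (2 * (x + 1) ^ 3)) *
      (C (2 * x + 17 * x ^ 2 + 60 * x ^ 3 + 110 * x ^ 4 + 98 * x ^ 5) +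
        C (2 + 26 * x + 129 * x ^ 2 + 320 * x ^ 3 + 380 * x ^ 4) * X +
        C (9 + 90 * x + 351 * x ^ 2 + 600 * x ^ 3) * X ^ 2 +
        C (21 + 174 * x + 483 * x ^ 2) * X ^ 3 + C (33 + 198 * x) * X ^ 4 + C 33 * X ^ 5),
    -C (1 / (2 * (x + 1))) *
      (C (2 * x ^ 2 + 13 * x ^ 3 + 32 * x ^ 4 + 33 * x ^ 5) +
        C (4 * x + 33 * x ^ 2 + 102 * x ^ 3 + 133 * x ^ 4) * X +
        C (2 + 27 * x + 120 * x ^ 2 + 215 * x ^ 3) * X ^ 2 +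
        C (7 + 62 * x + 175 * x ^ 2) * X ^ 3 + C (12 + 72 * x) * X ^ 4 + C 12 * X ^ 5)]

theorem natDegree_certificate_le (x : ℝ) (i : Fin 3) : (certificate x i).natDegree ≤ 5 := by
  fin_cases i <;> dsimp [certificate] <;> compute_degree

theorem certificate_identity (n : ℕ) (i : Fin 3) (t : ℝ) :
    (wellPoisedWeight (n + 1) i).eval t *
        ((n + 1) ^ 4 * (t - (n + 1)) * (t + 2 * n + 1) * (t + 2 * n + 2)) =
      (t + n + 1) ^ 7 *
          ((∑ j : Fin 3, C (transfer n i j : ℝ) * wellPoisedWeight n j).eval t -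
            (t - (n + 1)) * (certificate n i).eval t) +
        (certificate n i).eval (t + 1) * (t ^ 7 * (t + 2 * n + 1)) := by
  have hn : (n : ℝ) + 1 ≠ 0 := by positivity
  fin_cases i <;>
    simp only [wellPoisedWeight, certificate, transfer, Fin.sum_univ_three, eval_add, eval_mul,
      eval_neg, eval_pow, eval_X, eval_C, Matrix.of_apply, Matrix.cons_val, Fin.zero_eta,
      Fin.mk_one, Fin.reduceFinMk, Fin.isValue, Fin.coe_ofNat_eq_mod, Nat.zero_mod, Nat.one_mod,
      Nat.mod_succ] <;>
    push_cast <;>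
    field_simp <;>
    ring

theorem wellPoisedSeries_succ {n : ℕ} (hn : 1 ≤ n) :
    wellPoisedSeries (n + 1) = (transfer n).map (Rat.cast : ℚ → ℝ) *ᵥ wellPoisedSeries n := by
  ext i
  have weight_degree (j : Fin 3) := natDegree_wellPoisedWeight_le hn n j
  rw [wellPoisedSeries, kernelSum_succ_eq
    (natDegree_sum_le_of_forall_le _ _ fun j _ ↦ (natDegree_C_mul_le _ _).trans (weight_degree j))
    ((natDegree_certificate_le n i).trans (by omega))
    (by exact_mod_cast certificate_identity n i), kernelSum_sum _ weight_degree]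
  rfl

theorem hasSum_zetaRe {s : ℕ} (hs : 1 < s) :
    HasSum (fun k : ℕ ↦ 1 / ((k : ℝ) + 1) ^ s) (zetaRe s) := by
  have zetaRe_eq_tsum : zetaRe s = ∑' n : ℕ, 1 / (n : ℝ) ^ s := by
    rw [zetaRe, zeta_nat_eq_tsum_of_gt_one hs, ← Complex.ofReal_re (∑' n : ℕ, 1 / (n : ℝ) ^ s)]
    push_cast
    rfl
  have h := (hasSum_nat_add_iff' 1).2 (Real.summable_one_div_nat_pow.2 hs).hasSum
  simpa [zetaRe_eq_tsum, Nat.ne_zero_of_lt hs] using h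

theorem hasSum_wellPoised_partialFractions {N : ℕ} (b : Fin N → ℝ) :
    HasSum (fun k : ℕ ↦ ∑ j : Fin N,
        b j * (1 / ((k : ℝ) + 2) ^ (j + 2 : ℕ) - (-1) ^ (j : ℕ) / ((k : ℝ) + 1) ^ (j + 2 : ℕ)))
      (∑ j : Fin N, b j * ((1 - (-1) ^ (j : ℕ)) * zetaRe (j + 2) - 1)) := by
  refine hasSum_sum fun j _ ↦ HasSum.mul_left (b j) ?_
  have zeta_sum : HasSum (fun k : ℕ ↦ 1 / ((k : ℝ) + 1) ^ (j + 2 : ℕ)) (zetaRe (j + 2)) :=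
    hasSum_zetaRe (by omega)
  have shifted_sum : HasSum (fun k : ℕ ↦ 1 / ((k : ℝ) + 2) ^ (j + 2 : ℕ)) (zetaRe (j + 2) - 1) := by
    simpa [add_assoc, one_add_one_eq_two] using (hasSum_nat_add_iff' 1).2 zeta_sum
  have difference_sum := shifted_sum.sub (zeta_sum.mul_left ((-1) ^ (j : ℕ)))
  simp only [mul_one_div] at difference_sum
  rwa [show (1 - (-1) ^ (j : ℕ)) * zetaRe (j + 2) - 1 =
    zetaRe (j + 2) - 1 - (-1) ^ (j : ℕ) * zetaRe (j + 2) by ring]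

/-- Row `i`: the coefficients of `1 / (t + 1) ^ (j + 2)` in the partial fractions of the summand of
`wellPoisedSeries 1 i`. -/
def partialFractionCoeff : Matrix (Fin 3) (Fin 5) ℝ :=
  !![33 / 2, 33 / 2, 21 / 2, 9 / 2, 1; -6, -6, -7 / 2, -1, 0; 5 / 2, 5 / 2, 1, 0, 0]

theorem wellPoisedWeight_mul_kernel_one (i : Fin 3) {t : ℝ} (ht : 0 < t) :
    (wellPoisedWeight 1 i).eval t * wellPoisedKernel 1 t = ∑ j : Fin 5,
      partialFractionCoeff i j *
        (1 / (t + 1) ^ (j + 2 : ℕ) - (-1) ^ (j : ℕ) / t ^ (j + 2 : ℕ)) := by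
  fin_cases i <;>
    simp only [wellPoisedWeight, wellPoisedKernel, partialFractionCoeff, Fin.sum_univ_five,
      Finset.prod_range_succ, Finset.prod_range_zero, Nat.factorial_one, eval_add, eval_mul,
      eval_pow, eval_X, eval_C, Matrix.of_apply, Matrix.cons_val, Fin.zero_eta,
      Fin.mk_one, Fin.reduceFinMk, Fin.isValue, Fin.coe_ofNat_eq_mod, Nat.zero_mod, Nat.one_mod,
      Nat.mod_succ,
      Nat.reduceMod] <;>
    push_cast <;>
    field_simp <;>
    ring

theorem wellPoisedSeries_one (i : Fin 3) :
    wellPoisedSeries 1 i =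
      zetaRe 5 * zetaFivePart i + zetaRe 3 * zetaThreePart i - rationalPart i := by
  have summand_eq (k : ℕ) := wellPoisedWeight_mul_kernel_one i (t := (k : ℝ) + 1) (by positivity)
  simp only [add_assoc, one_add_one_eq_two] at summand_eq
  rw [wellPoisedSeries, kernelSum, Nat.cast_one]
  simp only [summand_eq]
  rw [(hasSum_wellPoised_partialFractions (partialFractionCoeff i)).tsum_eq]
  fin_cases i <;>
    simp only [partialFractionCoeff, zetaFivePart, zetaThreePart, rationalPart, Fin.sum_univ_five,
      Matrix.of_apply, Matrix.cons_val, Fin.zero_eta,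
      Fin.mk_one, Fin.reduceFinMk, Fin.isValue, Fin.coe_ofNat_eq_mod, Nat.zero_mod, Nat.one_mod,
      Nat.mod_succ,
      Nat.reduceMod, Nat.reduceAdd] <;>
    push_cast <;>
    ring

theorem wellPoisedSeries_eq_transferOrbit (m : ℕ) (i : Fin 3) :
    wellPoisedSeries (m + 1) i = zetaRe 5 * transferOrbit zetaFivePart m i +
      zetaRe 3 * transferOrbit zetaThreePart m i - transferOrbit rationalPart m i := by
  induction m generalizing i with
  | zero => exact wellPoisedSeries_one i
  | succ m ih =>
    rw [wellPoisedSeries_succ (by omega)]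
    simp only [Matrix.mulVec, dotProduct, Fin.sum_univ_three, ih, Matrix.map_apply, transferOrbit,
      matrixOrbit]
    push_cast
    ring

end WellPoisedSeries

section LinearForms

open scoped Matrix

theorem zetaFive_form_eq (m : ℕ) :
    (minorSeq (zetaThreePart ⨯₃ zetaFivePart) (m + 1) : ℝ) * zetaRe 5 -
        minorSeq (zetaThreePart ⨯₃ rationalPart) (m + 1) =
      transferOrbit zetaThreePart m 0 * wellPoisedSeries (m + 1) 1 -
        transferOrbit zetaThreePart m 1 * wellPoisedSeries (m + 1) 0 := by
  simp only [minorSeq_cross, wellPoisedSeries_eq_transferOrbit]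
  push_cast
  ring

theorem zetaThree_form_eq (m : ℕ) :
    (minorSeq (zetaThreePart ⨯₃ zetaFivePart) (m + 1) : ℝ) * zetaRe 3 -
        minorSeq (rationalPart ⨯₃ zetaFivePart) (m + 1) =
      transferOrbit zetaFivePart m 1 * wellPoisedSeries (m + 1) 0 -
        transferOrbit zetaFivePart m 0 * wellPoisedSeries (m + 1) 1 := by
  simp only [minorSeq_cross, wellPoisedSeries_eq_transferOrbit]
  push_cast
  ring

theorem zetaFive_form_pos (m : ℕ) :
    0 < (minorSeq (zetaThreePart ⨯₃ zetaFivePart) (m + 1) : ℝ) * zetaRe 5 -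
      minorSeq (zetaThreePart ⨯₃ rationalPart) (m + 1) := by
  obtain ⟨first_pos, second_neg⟩ := transferOrbit_zetaThreePart_sign m
  rw [zetaFive_form_eq, sub_pos]
  exact (mul_neg_of_neg_of_pos (by exact_mod_cast second_neg)
    (wellPoisedSeries_pos m.succ_pos 0)).trans
      (mul_pos (by exact_mod_cast first_pos) (wellPoisedSeries_pos m.succ_pos 1))

theorem zetaThree_form_neg (m : ℕ) :
    (minorSeq (zetaThreePart ⨯₃ zetaFivePart) (m + 1) : ℝ) * zetaRe 3 -
      minorSeq (rationalPart ⨯₃ zetaFivePart) (m + 1) < 0 := by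
  obtain ⟨first_pos, second_neg⟩ := transferOrbit_zetaFivePart_sign m
  rw [zetaThree_form_eq, sub_neg]
  exact (mul_neg_of_neg_of_pos (by exact_mod_cast second_neg)
    (wellPoisedSeries_pos m.succ_pos 0)).trans
      (mul_pos (by exact_mod_cast first_pos) (wellPoisedSeries_pos m.succ_pos 1))

theorem zetaThreePart_cross_zetaFivePart : zetaThreePart ⨯₃ zetaFivePart = ![10, 45, 42] := by
  rw [cross_apply, zetaThreePart, zetaFivePart]
  simp only [Matrix.cons_val]
  norm_num

theorem zetaThreePart_cross_rationalPart :
    zetaThreePart ⨯₃ rationalPart = ![21 / 2, 47, 87 / 2] := by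
  rw [cross_apply, zetaThreePart, rationalPart]
  simp only [Matrix.cons_val]
  norm_num

theorem rationalPart_cross_zetaFivePart :
    rationalPart ⨯₃ zetaFivePart = ![12, 54, 101 / 2] := by
  rw [cross_apply, rationalPart, zetaFivePart]
  simp only [Matrix.cons_val]
  norm_num

theorem Rec1.eq_minorSeq {y : ℕ → ℚ} (hy : Rec1 y) {a b c : ℚ}
    (h0 : y 0 = 98 * a - 33 * b + 12 * c) (h1 : y 1 = c)
    (h2 : y 2 = -(261 / 32 * a + 839 / 16 * b + 2951 / 8 * c)) : y = minorSeq ![a, b, c] := by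
  refine hy.ext (rec1_minorSeq _) (h0.trans ?_) h1 (h2.trans ?_)
  · simp only [minorSeq, rationalPart, dotProduct, Fin.sum_univ_three, Matrix.cons_val]
    ring
  · simp only [minorSeq, matrixOrbit, cofactorTransfer, Matrix.mulVec, dotProduct,
      Fin.sum_univ_three, Matrix.neg_apply, Matrix.of_apply, Matrix.cons_val]
    norm_num
    ring

end LinearForms

/-- For all integers `n ≥ 1` the linear forms `ℓ_n = q_n ζ(5) − p_n` and
`ℓ̃_n = q_n ζ(3) − p̃_n` satisfy `ℓ_n > 0` and `ℓ̃_n < 0`. -/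
theorem stmt0
    (q p pt : ℕ → ℚ)
    (hq : Rec1 q) (hp : Rec1 p) (hpt : Rec1 pt)
    (hq0 : q 0 = -1) (hq1 : q 1 = 42) (hq2 : q 2 = -17934)
    (hp0 : p 0 = 0) (hp1 : p 1 = 87/2) (hp2 : p 2 = -1190161/64)
    (hpt0 : pt 0 = 0) (hpt1 : pt 1 = 101/2) (hpt2 : pt 2 = -344923/16) :
    ∀ n : ℕ, 1 ≤ n →
      0 < (q n : ℝ) * zetaRe 5 - (p n : ℝ) ∧
      (q n : ℝ) * zetaRe 3 - (pt n : ℝ) < 0 := by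
  have q_eq : q = minorSeq ![10, 45, 42] :=
    hq.eq_minorSeq (by norm_num [hq0]) (by norm_num [hq1]) (by norm_num [hq2])
  have p_eq : p = minorSeq ![21 / 2, 47, 87 / 2] :=
    hp.eq_minorSeq (by norm_num [hp0]) (by norm_num [hp1]) (by norm_num [hp2])
  have pt_eq : pt = minorSeq ![12, 54, 101 / 2] :=
    hpt.eq_minorSeq (by norm_num [hpt0]) (by norm_num [hpt1]) (by norm_num [hpt2])
  intro n hn
  obtain ⟨m, rfl⟩ := Nat.exists_eq_add_of_le' hn
  rw [q_eq, p_eq, pt_eq, ← zetaThreePart_cross_zetaFivePart, ← zetaThreePart_cross_rationalPart,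
    ← rationalPart_cross_zetaFivePart]
  exact ⟨zetaFive_form_pos m, zetaThree_form_neg m⟩
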